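/- arXiv:2411.11702 — 5 statements merged into one kernel-verified Lean document; each statement's English description precedes it below -/
import Mathlib

section
/- Let f : ℝ → ℝ be strictly concave on [0,∞), let λ > 0, and let (a_i)_{i≥1} be nonnegative reals with ∑_{i≥1} a_i = 1, ∑_{i≥1} i·a_i < ∞, and such that there exist two distinct indices i ≠ j with a_i > 0 and a_j > 0. Set λ' = λ·∑_{i≥1} i·a_i. Assume that ∫₀^∞ |f(t)|·λe^{−λt} dt < ∞ and that ∑_{i≥1} a_i ∫₀^∞ |f(t)|·(λ'/i)e^{−(λ'/i)t} dt < ∞. Then the mixture of exponential averages ∑_{i≥1} a_i ∫₀^∞ f(t)·(λ'/i)e^{−(λ'/i)t} dt is strictly less than ∫₀^∞ f(t)·λe^{−λt} dt. -/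
/-!
Rescaling time by the rate writes each `Exp(r)` average of `f` as `∫ f(u / r) e^{-u} du`, so all
averages are taken against the same density. The calibration of `lam'` says that the means
`(i + 1) / lam'`, weighted by `a i`, have barycenter `1 / lam`. For almost every `u > 0` the series
`∑ a i * f ((i + 1) u / lam')` converges absolutely, and the strict Jensen inequality
(`StrictConcaveOn.tsum_lt_of_hasSum`, from a supporting line of `f` at `u / lam`) bounds it strictly
by `f (u / lam)`. Integrating against `e^{-u}` and exchanging sum and integral by absolute
convergence gives the claim.
-/

open MeasureTheory Real Set

/-- A strictly concave function on `[0, ∞)` lies strictly below its supporting line at an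
interior point, away from that point. -/
lemma StrictConcaveOn.exists_lt_supporting_line {f : ℝ → ℝ}
    (hf : StrictConcaveOn ℝ (Set.Ici (0 : ℝ)) f) {x : ℝ} (hx : 0 < x) :
    ∃ m : ℝ, ∀ y, 0 ≤ y → y ≠ x → f y < f x + m * (y - x) := by
  have hxi : x ∈ interior (Set.Ici (0 : ℝ)) := by simpa using hx
  have hR := hf.neg.convexOn.hasDerivWithinAt_rightDeriv_of_mem_interior hxi
  have hL := hf.neg.convexOn.hasDerivWithinAt_leftDeriv_of_mem_interior hxi
  have hLR := hf.neg.convexOn.leftDeriv_le_rightDeriv_of_mem_interior hxi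
  refine ⟨-derivWithin (-f) (Set.Ioi x) x, fun y hy hyx => ?_⟩
  rcases lt_or_gt_of_ne hyx with h | h
  · have h1 := hf.neg.slope_lt_of_hasDerivWithinAt_Iio hy hx.le h hL
    have h2 := h1.trans_le hLR
    rw [slope_def_field, div_lt_iff₀ (by linarith)] at h2
    simp only [Pi.neg_apply] at h2
    linarith
  · have h2 := hf.neg.lt_slope_of_hasDerivWithinAt_Ioi hx.le hy h hR
    rw [slope_def_field, lt_div_iff₀ (by linarith)] at h2
    simp only [Pi.neg_apply] at h2
    linarith

/-- Strict Jensen inequality for countable weights, at an interior barycenter `x`. -/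
lemma StrictConcaveOn.tsum_lt_of_hasSum {f : ℝ → ℝ}
    (hf : StrictConcaveOn ℝ (Set.Ici (0 : ℝ)) f) {a y : ℕ → ℝ} {x : ℝ} (hx : 0 < x)
    (ha : ∀ n, 0 ≤ a n) (hy : ∀ n, 0 ≤ y n) (h1 : HasSum a 1)
    (hxy : HasSum (fun n => a n * y n) x) (hs : Summable fun n => a n * f (y n))
    {k : ℕ} (hk : 0 < a k) (hkx : y k ≠ x) : ∑' n, a n * f (y n) < f x := by
  obtain ⟨m, hm⟩ := hf.exists_lt_supporting_line hx
  have hline : HasSum (fun n => a n * (f x + m * (y n - x))) (f x) := by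
    have h := (h1.mul_right (f x - m * x)).add (hxy.mul_left m)
    rw [show 1 * (f x - m * x) + m * x = f x by ring] at h
    have he : (fun n => a n * (f x + m * (y n - x)))
        = fun n => a n * (f x - m * x) + m * (a n * y n) := by
      funext n
      ring
    rwa [he]
  have hstrict : a k * f (y k) < a k * (f x + m * (y k - x)) :=
    mul_lt_mul_of_pos_left (hm _ (hy k) hkx) hk
  refine hasSum_lt (fun n => ?_) hstrict hs.hasSum hline
  refine mul_le_mul_of_nonneg_left ?_ (ha n)
  by_cases h : y n = x
  · simp [h]
  · exact (hm _ (hy n) h).le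

/-- A series of integrable functions with summable `L¹` norms converges absolutely almost
everywhere, to an integrable sum. -/
lemma ae_summable_and_integrable_tsum {α : Type*} [MeasurableSpace α] {μ : Measure α}
    {F : ℕ → α → ℝ} (hF : ∀ n, Integrable (F n) μ)
    (hs : Summable fun n => ∫ x, ‖F n x‖ ∂μ) :
    (∀ᵐ x ∂μ, Summable fun n => F n x) ∧ Integrable (fun x => ∑' n, F n x) μ := by
  have hfin : ∫⁻ x, ∑' n, ‖F n x‖ₑ ∂μ ≠ ⊤ := by
    rw [lintegral_tsum fun n => (hF n).1.enorm]
    have h (n : ℕ) : ∫⁻ x, ‖F n x‖ₑ ∂μ = ENNReal.ofReal (∫ x, ‖F n x‖ ∂μ) :=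
      (ofReal_integral_norm_eq_lintegral_enorm (hF n)).symm
    simp_rw [h]
    exact hs.tsum_ofReal_ne_top
  have hsum : ∀ᵐ x ∂μ, Summable fun n => F n x := by
    filter_upwards [ae_lt_top' (AEMeasurable.tsum fun n => (hF n).1.enorm) hfin] with x hx
    refine Summable.of_nnnorm ?_
    exact ENNReal.tsum_coe_ne_top_iff_summable.1 hx.ne
  refine ⟨hsum, AEMeasurable.aestronglyMeasurable ?_, ?_⟩
  · refine aemeasurable_of_tendsto_metrizable_ae Filter.atTop
      (f := fun N x => ∑ n ∈ Finset.range N, F n x)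
      (fun N => Finset.aemeasurable_fun_sum _ fun n _ => (hF n).1.aemeasurable) ?_
    filter_upwards [hsum] with x hx using hx.hasSum.tendsto_sum_nat
  · exact (lintegral_mono fun x => enorm_tsum_le_tsum_enorm).trans_lt hfin.lt_top

/-- Rescaling by the rate turns an `Exp(r)` average into an `Exp(1)` average. -/
lemma integral_exp_rate_eq (h : ℝ → ℝ) {r : ℝ} (hr : 0 < r) :
    ∫ t in Set.Ioi (0 : ℝ), h t * (r * Real.exp (-r * t))
      = ∫ u in Set.Ioi (0 : ℝ), h (r⁻¹ * u) * Real.exp (-u) := by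
  have key := integral_comp_mul_left_Ioi' (fun t => h t * (r * Real.exp (-r * t))) 0
    (inv_pos.2 hr)
  rw [mul_zero] at key
  rw [← key, smul_eq_mul, ← integral_const_mul]
  congr 1 with u
  have : -r * (r⁻¹ * u) = -u := by field_simp
  rw [this]
  field_simp

lemma integrableOn_exp_rate_iff (h : ℝ → ℝ) {r : ℝ} (hr : 0 < r) :
    IntegrableOn (fun t => h t * (r * Real.exp (-r * t))) (Set.Ioi 0) ↔
      IntegrableOn (fun u => h (r⁻¹ * u) * Real.exp (-u)) (Set.Ioi 0) := by
  have key := integrableOn_Ioi_comp_mul_left_iff (fun t => h t * (r * Real.exp (-r * t))) 0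
    (inv_pos.2 hr)
  rw [mul_zero] at key
  rw [← key]
  have (u : ℝ) : h (r⁻¹ * u) * (r * Real.exp (-r * (r⁻¹ * u)))
      = r * (h (r⁻¹ * u) * Real.exp (-u)) := by
    have : -r * (r⁻¹ * u) = -u := by field_simp
    rw [this]
    ring
  simp_rw [this]
  exact integrable_const_mul_iff hr.ne'.isUnit _

/-- **Theorem 1 of the paper.** If the time-fee function `f` is strictly concave on `[0, ∞)`,
then the mixture of exponential averages of `f` with rates `λ'/i` (weights `a i`, where index
`i : ℕ` stands for the group index `i + 1 ≥ 1`, and `λ' = λ · ∑ i·a_i`) is strictly smaller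
than the exponential average of `f` with rate `λ`. -/
theorem mixture_of_exponential_averages_lt_of_strictConcaveOn
    (f : ℝ → ℝ) (hf : StrictConcaveOn ℝ (Set.Ici (0 : ℝ)) f)
    (lam : ℝ) (hlam : 0 < lam)
    (a : ℕ → ℝ) (ha : ∀ i, 0 ≤ a i) (hsum : ∑' i, a i = 1)
    (hsummul : Summable (fun i : ℕ => (i + 1 : ℝ) * a i))
    (i j : ℕ) (hij : i ≠ j) (hai : 0 < a i) (haj : 0 < a j)
    (lam' : ℝ) (hlam' : lam' = lam * ∑' i : ℕ, (i + 1 : ℝ) * a i)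
    (hInt : IntegrableOn (fun t => f t * (lam * Real.exp (-lam * t))) (Set.Ioi 0))
    (hInti : ∀ i : ℕ, IntegrableOn
      (fun t => f t * (lam' / (i + 1) * Real.exp (-(lam' / (i + 1)) * t))) (Set.Ioi 0))
    (hSum2 : Summable (fun i : ℕ => a i * ∫ t in Set.Ioi (0 : ℝ),
      |f t| * (lam' / (i + 1) * Real.exp (-(lam' / (i + 1)) * t)))) :
    (∑' i : ℕ, a i * ∫ t in Set.Ioi (0 : ℝ),
        f t * (lam' / (i + 1) * Real.exp (-(lam' / (i + 1)) * t)))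
      < ∫ t in Set.Ioi (0 : ℝ), f t * (lam * Real.exp (-lam * t)) := by
  have h1 : HasSum a 1 := by
    -- A divergent series would have the junk value `0 ≠ 1`.
    have : Summable a := by
      by_contra h
      rw [tsum_eq_zero_of_not_summable h] at hsum
      exact zero_ne_one hsum
    exact hsum ▸ this.hasSum
  have hK : 0 < ∑' i : ℕ, (i + 1 : ℝ) * a i :=
    hsummul.tsum_pos (fun n => mul_nonneg (by positivity) (ha n)) i (by positivity)
  have hlam'0 : 0 < lam' := hlam' ▸ mul_pos hlam hK
  have hr (n : ℕ) : 0 < lam' / (n + 1 : ℝ) := by positivity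
  have hbar : HasSum (fun n : ℕ => a n * (lam' / (n + 1 : ℝ))⁻¹) lam⁻¹ := by
    have h := hsummul.hasSum.mul_left lam'⁻¹
    rw [show lam'⁻¹ * ∑' i : ℕ, (i + 1 : ℝ) * a i = lam⁻¹ by rw [hlam']; field_simp] at h
    have he : (fun n : ℕ => a n * (lam' / (n + 1 : ℝ))⁻¹)
        = fun n : ℕ => lam'⁻¹ * ((n + 1 : ℝ) * a n) := by
      funext n
      rw [inv_div]
      ring
    rwa [he]
  -- The means of the groups `i` and `j` differ, so one of them differs from the barycenter.
  obtain ⟨k, hk, hkne⟩ : ∃ k : ℕ, 0 < a k ∧ (lam' / (k + 1 : ℝ))⁻¹ ≠ lam⁻¹ := by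
    by_contra! hcon
    have h := (hcon i hai).trans (hcon j haj).symm
    rw [inv_div, inv_div, div_left_inj' hlam'0.ne'] at h
    exact hij (by exact_mod_cast add_right_cancel h)
  simp_rw [integral_exp_rate_eq f hlam, fun n : ℕ => integral_exp_rate_eq f (hr n)]
  simp_rw [fun n : ℕ => integral_exp_rate_eq (fun t => |f t|) (hr n)] at hSum2
  rw [integrableOn_exp_rate_iff f hlam] at hInt
  have hInti' (n : ℕ) := (integrableOn_exp_rate_iff f (hr n)).1 (hInti n)
  let F : ℕ → ℝ → ℝ := fun n u => a n * (f ((lam' / (n + 1 : ℝ))⁻¹ * u) * Real.exp (-u))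
  have hF (n : ℕ) : Integrable (F n) (volume.restrict (Set.Ioi 0)) := (hInti' n).const_mul (a n)
  have hFs : Summable fun n => ∫ u in Set.Ioi (0 : ℝ), ‖F n u‖ := by
    convert hSum2 using 2 with n
    rw [← integral_const_mul]
    congr 1 with u
    simp only [F, norm_mul, Real.norm_eq_abs, abs_of_nonneg (ha n), Real.abs_exp]
  obtain ⟨hae, hFint⟩ := ae_summable_and_integrable_tsum hF hFs
  have hlt : ∀ᵐ u ∂(volume.restrict (Set.Ioi (0 : ℝ))),
      0 < f (lam⁻¹ * u) * Real.exp (-u) - ∑' n, F n u := by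
    filter_upwards [hae, ae_restrict_mem measurableSet_Ioi] with u hu hu0
    have hu0 : 0 < u := hu0
    have hFe (n : ℕ) : F n u = a n * f ((lam' / (n + 1 : ℝ))⁻¹ * u) * Real.exp (-u) := by
      simp only [F]; ring
    simp_rw [hFe] at hu ⊢
    rw [tsum_mul_right, ← sub_mul]
    refine mul_pos (sub_pos.2 ?_) (Real.exp_pos _)
    refine hf.tsum_lt_of_hasSum (y := fun n : ℕ => (lam' / (n + 1 : ℝ))⁻¹ * u) (by positivity) ha
      (fun n => by positivity) h1 ?_ ((summable_mul_right_iff (Real.exp_pos _).ne').1 hu) hk ?_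
    · simpa only [mul_assoc] using hbar.mul_right u
    · exact fun h => hkne (mul_right_cancel₀ hu0.ne' h)
  have hpos : 0 < ∫ u in Set.Ioi (0 : ℝ), (f (lam⁻¹ * u) * Real.exp (-u) - ∑' n, F n u) := by
    rw [integral_pos_iff_support_of_nonneg_ae (hlt.mono fun u h => h.le) (hInt.sub hFint)]
    refine pos_iff_ne_zero.2 fun h0 => ?_
    -- A null support would contradict positivity almost everywhere, as `(0, ∞)` is not null.
    have hzero := measure_eq_zero_iff_ae_notMem.1 h0
    have hfalse : ∀ᵐ u ∂(volume.restrict (Set.Ioi (0 : ℝ))), False := by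
      filter_upwards [hlt, hzero] with u hu hu' using hu' hu.ne'
    have := ae_iff.1 hfalse
    simp at this
  rw [integral_sub hInt hFint, ← integral_tsum_of_summable_integral_norm hF hFs] at hpos
  simp only [F, integral_const_mul] at hpos
  linarith
end

section
/- Let f : ℝ → ℝ be strictly concave on [0,∞), let λ, λ' > 0, and let (a_i)_{i≥1} be nonnegative reals with ∑_{i≥1} a_i = 1 such that λ·∑_{i≥1} i·a_i = λ' and there exist two distinct indices i ≠ j with a_i > 0 and a_j > 0. Assume ∫₀^∞ |f(t)|·λe^{−λt} dt < ∞ and ∑_{i≥1} a_i ∫₀^∞ |f((λ/λ')·i·t)|·λe^{−λt} dt < ∞. Then ∑_{i≥1} a_i ∫₀^∞ f((λ/λ')·i·t)·λe^{−λt} dt < ∫₀^∞ f(t)·λe^{−λt} dt. -/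
/-! Write `c i = (λ/λ')·(i+1)`, so that `∑ a i = ∑ a i * c i = 1`. Concavity gives the
supporting-line inequality `f (c t) ≤ f t + (c - 1) * (t * p t)` for `t > 0`, where `p t` is the
right derivative of `f` at `t`, with strict inequality when `c ≠ 1`
(`StrictConcaveOn.dilate_lt`). Integrating against the exponential density gives
`∫ f (c t) w ≤ ∫ f w + (c - 1) * G` with `G = ∫ t * p t * w`, and averaging over `i` kills the `G`
term because `∑ a i * (c i - 1) = 0`. Since two distinct dilations carry mass, one of them differs
from `1`, whence strictness. No exchange of sum and integral is needed.

The only delicate point is that `G` is a genuine integral. Applying the supporting-line inequality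
to one dilation `c < 1` and one dilation `d > 1` squeezes `t * p t` between
`(f (d t) - f t) / (d - 1)` and `(f t - f (c t)) / (1 - c)`, both integrable against the density
(`integrableOn_mul_rightDeriv`). -/

open MeasureTheory Real Set

/-- A strictly convex function lies strictly above the line through `(t, g t)` whose slope is the
right derivative; to the left of `t` this uses that the left derivative is at most the right one. -/
lemma StrictConvexOn.tangent_lt {g : ℝ → ℝ} (hg : StrictConvexOn ℝ (Ici (0 : ℝ)) g) {t y : ℝ}
    (ht : 0 < t) (hy : 0 ≤ y) (hyt : y ≠ t) :
    g t + derivWithin g (Ioi t) t * (y - t) < g y := by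
  have hti : t ∈ interior (Ici (0 : ℝ)) := by simpa using ht
  rcases lt_or_gt_of_ne hyt with h | h
  · have h1 := hg.slope_lt_leftDeriv (mem_Ici.2 hy) (mem_Ici.2 ht.le) h
      (hg.convexOn.differentiableWithinAt_Iio_of_mem_interior hti)
    have h2 := h1.trans_le (hg.convexOn.leftDeriv_le_rightDeriv_of_mem_interior hti)
    rw [slope_def_field, div_lt_iff₀ (by linarith)] at h2
    linarith
  · have h1 := hg.rightDeriv_lt_slope (mem_Ici.2 ht.le) (mem_Ici.2 hy) h
      (hg.convexOn.differentiableWithinAt_Ioi_of_mem_interior hti)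
    rw [slope_def_field, lt_div_iff₀ (by linarith)] at h1
    linarith

lemma StrictConcaveOn.dilate_lt {f : ℝ → ℝ} (hf : StrictConcaveOn ℝ (Ici (0 : ℝ)) f) {t c : ℝ}
    (ht : 0 < t) (hc : 0 < c) (hc1 : c ≠ 1) :
    f (c * t) < f t + (c - 1) * (t * derivWithin f (Ioi t) t) := by
  have hne : c * t ≠ t := fun h => hc1 (by
    have : (c - 1) * t = 0 := by linarith
    rcases mul_eq_zero.1 this with h | h <;> linarith)
  have h := hf.neg.tangent_lt ht (mul_pos hc ht).le hne
  simp only [derivWithin.neg, Pi.neg_apply] at h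
  linarith

/-- The squeeze between a contraction `c < 1` and an expansion `d > 1` that makes `t` times the
right derivative of `f` at `t` integrable against a nonnegative continuous weight `w`. -/
lemma integrableOn_mul_rightDeriv {f w : ℝ → ℝ} (hf : StrictConcaveOn ℝ (Ici (0 : ℝ)) f)
    (hw : Continuous w) (hw0 : ∀ t, 0 ≤ w t) {c d : ℝ} (hc : 0 < c) (hc1 : c < 1) (hd : 1 < d)
    (h1 : IntegrableOn (fun t => f t * w t) (Ioi 0))
    (h2 : IntegrableOn (fun t => f (c * t) * w t) (Ioi 0))
    (h3 : IntegrableOn (fun t => f (d * t) * w t) (Ioi 0)) :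
    IntegrableOn (fun t => t * derivWithin f (Ioi t) t * w t) (Ioi 0) := by
  have hU : IntegrableOn (fun t => (1 - c)⁻¹ * (f t * w t - f (c * t) * w t)) (Ioi 0) :=
    (h1.sub h2).const_mul _
  have hL : IntegrableOn (fun t => (d - 1)⁻¹ * (f (d * t) * w t - f t * w t)) (Ioi 0) :=
    (h3.sub h1).const_mul _
  refine Integrable.mono' (hL.abs.add hU.abs) ?_ ?_
  · exact ((measurable_id.mul (measurable_derivWithin_Ioi f)).mul
      hw.measurable).aestronglyMeasurable
  · refine (ae_restrict_iff' measurableSet_Ioi).2 (Filter.Eventually.of_forall fun t ht => ?_)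
    have ec := hf.dilate_lt (mem_Ioi.1 ht) hc hc1.ne
    have ed := hf.dilate_lt (mem_Ioi.1 ht) (by linarith : 0 < d) hd.ne'
    have hup : t * derivWithin f (Ioi t) t * w t ≤
        (1 - c)⁻¹ * (f t * w t - f (c * t) * w t) := by
      rw [← sub_mul, ← mul_assoc]
      refine mul_le_mul_of_nonneg_right ?_ (hw0 t)
      rw [inv_mul_eq_div, le_div_iff₀ (by linarith)]
      linarith
    have hlo : (d - 1)⁻¹ * (f (d * t) * w t - f t * w t) ≤
        t * derivWithin f (Ioi t) t * w t := by
      rw [← sub_mul, ← mul_assoc]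
      refine mul_le_mul_of_nonneg_right ?_ (hw0 t)
      rw [inv_mul_eq_div, div_le_iff₀ (by linarith)]
      linarith
    simp only [Real.norm_eq_abs, Pi.add_apply]
    rw [abs_le]
    constructor
    · linarith [neg_abs_le ((d - 1)⁻¹ * (f (d * t) * w t - f t * w t)),
        abs_nonneg ((1 - c)⁻¹ * (f t * w t - f (c * t) * w t))]
    · linarith [le_abs_self ((1 - c)⁻¹ * (f t * w t - f (c * t) * w t)),
        abs_nonneg ((d - 1)⁻¹ * (f (d * t) * w t - f t * w t))]

lemma setIntegral_dilate_lt {f w : ℝ → ℝ} (hf : StrictConcaveOn ℝ (Ici (0 : ℝ)) f)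
    (hw0 : ∀ t, 0 < w t) {c : ℝ} (hc : 0 < c) (hc1 : c ≠ 1)
    (h1 : IntegrableOn (fun t => f t * w t) (Ioi 0))
    (h2 : IntegrableOn (fun t => f (c * t) * w t) (Ioi 0))
    (h3 : IntegrableOn (fun t => t * derivWithin f (Ioi t) t * w t) (Ioi 0)) :
    ∫ t in Ioi (0 : ℝ), f (c * t) * w t < (∫ t in Ioi (0 : ℝ), f t * w t) +
      (c - 1) * ∫ t in Ioi (0 : ℝ), t * derivWithin f (Ioi t) t * w t := by
  have h3' : IntegrableOn (fun t => (c - 1) * (t * derivWithin f (Ioi t) t * w t)) (Ioi 0) :=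
    h3.const_mul _
  have h13 : IntegrableOn
      (fun t => f t * w t + (c - 1) * (t * derivWithin f (Ioi t) t * w t)) (Ioi 0) := h1.add h3'
  rw [← integral_const_mul, ← integral_add h1 h3', ← sub_pos, ← integral_sub h13 h2]
  have hpos : ∀ t ∈ Ioi (0 : ℝ), 0 <
      f t * w t + (c - 1) * (t * derivWithin f (Ioi t) t * w t) - f (c * t) * w t := by
    intro t ht
    have := mul_lt_mul_of_pos_right (hf.dilate_lt (mem_Ioi.1 ht) hc hc1) (hw0 t)
    linarith
  rw [setIntegral_pos_iff_support_of_nonneg_ae ((ae_restrict_iff' measurableSet_Ioi).2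
    (Filter.Eventually.of_forall fun t ht => (hpos t ht).le)) (h13.sub h2)]
  rw [inter_eq_right.2 fun t ht => Function.mem_support.2 (hpos t ht).ne']
  simp

/-- Intermediate inequality in the proof of the paper's Theorem 1: after rescaling every
group-`G_i` exponential average to the common rate `λ` (index `i : ℕ` stands for the group
index `i + 1 ≥ 1`), the mixture of exponential averages of the dilated functions
`t ↦ f ((λ/λ')·i·t)` is strictly smaller than the exponential average of `f` at rate `λ`,
under the calibration `λ · ∑ i·a_i = λ'`. -/
theorem mixture_of_dilated_exponential_averages_lt_of_strictConcaveOn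
    (f : ℝ → ℝ) (hf : StrictConcaveOn ℝ (Set.Ici (0 : ℝ)) f)
    (lam lam' : ℝ) (hlam : 0 < lam) (hlam' : 0 < lam')
    (a : ℕ → ℝ) (ha : ∀ i, 0 ≤ a i) (hsum : ∑' i, a i = 1)
    (hsummul : Summable (fun i : ℕ => (i + 1 : ℝ) * a i))
    (hcal : lam * ∑' i : ℕ, (i + 1 : ℝ) * a i = lam')
    (i j : ℕ) (hij : i ≠ j) (hai : 0 < a i) (haj : 0 < a j)
    (hInt : IntegrableOn (fun t => f t * (lam * Real.exp (-lam * t))) (Set.Ioi 0))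
    (hInti : ∀ i : ℕ, IntegrableOn
      (fun t => f (lam / lam' * (i + 1) * t) * (lam * Real.exp (-lam * t))) (Set.Ioi 0))
    (hSum2 : Summable (fun i : ℕ => a i * ∫ t in Set.Ioi (0 : ℝ),
      |f (lam / lam' * (i + 1) * t)| * (lam * Real.exp (-lam * t)))) :
    (∑' i : ℕ, a i * ∫ t in Set.Ioi (0 : ℝ),
        f (lam / lam' * (i + 1) * t) * (lam * Real.exp (-lam * t)))
      < ∫ t in Set.Ioi (0 : ℝ), f t * (lam * Real.exp (-lam * t)) := by
  have hsa : Summable a := by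
    by_contra h
    rw [tsum_eq_zero_of_not_summable h] at hsum
    exact zero_ne_one hsum
  have hr : 0 < lam / lam' := div_pos hlam hlam'
  set r := lam / lam' with hrdef
  set w : ℝ → ℝ := fun t => lam * Real.exp (-lam * t) with hwdef
  have hw : Continuous w := by fun_prop
  have hw0 : ∀ t, 0 < w t := fun t => mul_pos hlam (Real.exp_pos _)
  have hc : ∀ k : ℕ, 0 < r * (k + 1) := fun k => by positivity
  have hac : HasSum (fun k : ℕ => a k * (r * (k + 1))) 1 := by
    have h := hsummul.hasSum.mul_left r
    have e : r * ∑' k : ℕ, (k + 1 : ℝ) * a k = 1 := by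
      rw [hrdef, div_mul_eq_mul_div, hcal, div_self hlam'.ne']
    rw [e] at h
    exact h.congr_fun fun k => by ring
  have ha1 : HasSum a 1 := hsum ▸ hsa.hasSum
  have hdiff : HasSum (fun k : ℕ => a k * (r * (k + 1) - 1)) 0 := by
    have h := hac.sub ha1
    rw [sub_self] at h
    exact h.congr_fun fun k => by ring
  -- At least one of the two charged indices has dilation factor different from `1`.
  obtain ⟨m, ham, hm⟩ : ∃ m, 0 < a m ∧ r * ((m : ℝ) + 1) ≠ 1 := by
    by_contra! h
    have h2 := (h i hai).trans (h j haj).symm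
    have h3 := mul_left_cancel₀ hr.ne' h2
    exact hij (by exact_mod_cast add_right_cancel h3)
  -- The smallest dilation factor is a contraction: otherwise all terms of `hdiff` are nonnegative
  -- and the `m`-th is positive.
  have hc0 : r * ((0 : ℕ) + 1 : ℝ) < 1 := by
    by_contra! h
    have hge : ∀ k : ℕ, 0 ≤ r * ((k : ℝ) + 1) - 1 := fun k => by
      have : 0 ≤ r * (k : ℝ) := by positivity
      push_cast at h
      linarith
    have := hdiff.tsum_eq ▸ hdiff.summable.tsum_pos (fun k => mul_nonneg (ha k) (hge k)) m
      (mul_pos ham (lt_of_le_of_ne (hge m) (sub_ne_zero.2 hm).symm))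
    exact lt_irrefl _ this
  obtain ⟨N, hN⟩ : ∃ N : ℕ, 1 < r * ((N : ℝ) + 1) := by
    obtain ⟨N, hN⟩ := exists_nat_gt (1 / r)
    refine ⟨N, ?_⟩
    rw [div_lt_iff₀ hr] at hN
    linarith
  have hG := integrableOn_mul_rightDeriv hf hw (fun t => (hw0 t).le) (hc 0) hc0 hN hInt
    (hInti 0) (hInti N)
  set F := ∫ t in Ioi (0 : ℝ), f t * w t with hF
  set G := ∫ t in Ioi (0 : ℝ), t * derivWithin f (Ioi t) t * w t with hGdef
  have hlt : ∀ k : ℕ, r * ((k : ℝ) + 1) ≠ 1 →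
      ∫ t in Ioi (0 : ℝ), f (r * (k + 1) * t) * w t < F + (r * (k + 1) - 1) * G := fun k hk =>
    setIntegral_dilate_lt hf hw0 (hc k) hk hInt (hInti k) hG
  have hle : ∀ k : ℕ,
      ∫ t in Ioi (0 : ℝ), f (r * (k + 1) * t) * w t ≤ F + (r * (k + 1) - 1) * G := by
    intro k
    by_cases hk : r * ((k : ℝ) + 1) = 1
    · simp [hk, hF]
    · exact (hlt k hk).le
  have hR : HasSum (fun k : ℕ => a k * (F + (r * (k + 1) - 1) * G)) F := by
    have h := (ha1.mul_right F).add (hdiff.mul_right G)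
    rw [one_mul, zero_mul, add_zero] at h
    exact h.congr_fun fun k => by ring
  have hL : Summable (fun k : ℕ => a k * ∫ t in Ioi (0 : ℝ), f (r * (k + 1) * t) * w t) := by
    refine Summable.of_norm_bounded hSum2 fun k => ?_
    rw [norm_mul, Real.norm_of_nonneg (ha k)]
    refine mul_le_mul_of_nonneg_left ((norm_integral_le_integral_norm _).trans_eq ?_) (ha k)
    refine integral_congr_ae (Filter.Eventually.of_forall fun t => ?_)
    simp only [norm_mul, Real.norm_eq_abs]
    rw [abs_of_pos (hw0 t)]
  rw [← hR.tsum_eq]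
  exact hL.tsum_lt_tsum (fun k => mul_le_mul_of_nonneg_left (hle k) (ha k))
    (mul_lt_mul_of_pos_left (hlt m hm) ham) hR.summable
end

section
/- Let 0 < α < 1 and 0 ≤ p ≤ 1. Define the 3×3 matrix M on states {0, 1, 2} by M₀₀ = 1 − α(1−p), M₀₁ = α(1−p), M₀₂ = 0; M₁₀ = α, M₁₁ = 0, M₁₂ = 1 − α; M₂₀ = 1, M₂₁ = 0, M₂₂ = 0. Then M is row-stochastic (all entries nonnegative, each row sums to 1), and the vector π = (1/(1 + α(1−p)(2−α)))·(1, α(1−p), α(1−p)(1−α)) has nonnegative entries summing to 1 and satisfies π·M = π (i.e., π is a stationary distribution of M). -/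
/-!
Put `q = α (1 - p)`, so that `0 ≤ q ≤ 1`. The weights `1, q, q (1 - α)` are nonnegative and add up
to `1 + q (2 - α) > 0`, which is the normalizing constant. The balance equations for states `1` and
`2` read `1 * q = q` and `q * (1 - α) = q * (1 - α)`, and the one for state `0` is
`(1 - q) + q * α + q * (1 - α) = 1`.
-/

/-- The 3×3 transition matrix of the strategy `π₁^{Non-predictable}` (paper's Table 2) is
row-stochastic, and the vector
`(1/(1 + α(1−p)(2−α))) · (1, α(1−p), α(1−p)(1−α))` is a stationary distribution of it. -/
theorem nonpredictable_strategy_one_stationary_distribution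
    (α p : ℝ) (hα0 : 0 < α) (hα1 : α < 1) (hp0 : 0 ≤ p) (hp1 : p ≤ 1)
    (M : Matrix (Fin 3) (Fin 3) ℝ)
    (hM : M = Matrix.of
      ![![1 - α * (1 - p), α * (1 - p), 0],
        ![α, 0, 1 - α],
        ![1, 0, 0]])
    (v : Fin 3 → ℝ)
    (hv : v = fun k =>
      (1 / (1 + α * (1 - p) * (2 - α))) * ![1, α * (1 - p), α * (1 - p) * (1 - α)] k) :
    (∀ i j, 0 ≤ M i j) ∧ (∀ i, ∑ j, M i j = 1) ∧
      (∀ i, 0 ≤ v i) ∧ (∑ i, v i = 1) ∧ Matrix.vecMul v M = v := by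
  have hq0 : 0 ≤ α * (1 - p) := mul_nonneg hα0.le (by linarith)
  have hq1 : α * (1 - p) ≤ 1 := by nlinarith
  have hα : 0 ≤ 1 - α := by linarith
  -- The normalizing denominator is positive, so its inverse is not a junk value.
  have hD : 0 < 1 + α * (1 - p) * (2 - α) := by
    have := mul_nonneg hq0 (by linarith : (0 : ℝ) ≤ 2 - α)
    linarith
  have hc : 0 ≤ 1 / (1 + α * (1 - p) * (2 - α)) := by positivity
  have hqα := mul_nonneg hq0 hα
  subst hM hv
  -- With `q = α (1 - p)`, everything below is an identity or inequality in `q` and `α`.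
  generalize α * (1 - p) = q at *
  refine ⟨?_, ?_, ?_, ?_, ?_⟩
  · intro i j
    fin_cases i <;> fin_cases j <;> simp <;> linarith
  · intro i
    fin_cases i <;> simp [Fin.sum_univ_three]
  · intro i
    refine mul_nonneg hc ?_
    fin_cases i <;> simp <;> linarith
  · simp only [Fin.sum_univ_three, Matrix.cons_val]
    field_simp
    ring
  · ext j
    fin_cases j <;> simp [Matrix.vecMul, dotProduct, Fin.sum_univ_three] <;> ring
end

section
/- Let 0 < α < 1 and 0 ≤ p ≤ 1. Define the 4×4 matrix M on states {0, 1, 2, 3} by: row 0 = (1−p, (1−α)p, αp, 0); row 1 = (1−p, p, 0, 0); row 2 = (α(1−p), αp, 0, 1−α); row 3 = (1−p, p, 0, 0). Then M is row-stochastic, and with D = 1 + αp(1−p)(1−α), the vector π = (1/D)·(1−p, p(1 − α(1−p)), αp(1−p), αp(1−p)(1−α)) has nonnegative entries summing to 1 and satisfies π·M = π (i.e., π is a stationary distribution of M). -/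
/-- The 4×4 transition matrix of the strategy `π₁^{WeRLman}` (paper's Table 1) is
row-stochastic, and with `D = 1 + αp(1−p)(1−α)` the vector
`(1/D) · (1−p, p(1 − α(1−p)), αp(1−p), αp(1−p)(1−α))` is a stationary distribution of it. -/
theorem werlman_strategy_one_stationary_distribution
    (α p : ℝ) (hα0 : 0 < α) (hα1 : α < 1) (hp0 : 0 ≤ p) (hp1 : p ≤ 1)
    (M : Matrix (Fin 4) (Fin 4) ℝ)
    (hM : M = Matrix.of
      ![![1 - p, (1 - α) * p, α * p, 0],
        ![1 - p, p, 0, 0],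
        ![α * (1 - p), α * p, 0, 1 - α],
        ![1 - p, p, 0, 0]])
    (D : ℝ) (hD : D = 1 + α * p * (1 - p) * (1 - α))
    (v : Fin 4 → ℝ)
    (hv : v = fun k => (1 / D) *
      ![1 - p, p * (1 - α * (1 - p)), α * p * (1 - p), α * p * (1 - p) * (1 - α)] k) :
    (∀ i j, 0 ≤ M i j) ∧ (∀ i, ∑ j, M i j = 1) ∧
      (∀ i, 0 ≤ v i) ∧ (∑ i, v i = 1) ∧ Matrix.vecMul v M = v := by
  subst hM hv
  have hα : 0 ≤ 1 - α := by linarith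
  have hp : 0 ≤ 1 - p := by linarith
  have hα' := hα0.le
  -- The only factor whose sign is not immediate from the hypotheses.
  have hw : 0 ≤ 1 - α * (1 - p) := by nlinarith [mul_nonneg hα' hp0]
  have hDpos : 0 < D := by rw [hD]; positivity
  have hDne : D ≠ 0 := hDpos.ne'
  refine ⟨?_, ?_, ?_, ?_, ?_⟩
  · intro i j
    fin_cases i <;> fin_cases j <;> simp <;> first | assumption | positivity | linarith
  · intro i
    fin_cases i <;> simp [Fin.sum_univ_four] <;> ring
  · intro i
    refine mul_nonneg (by positivity) ?_
    fin_cases i <;> simp <;> first | assumption | positivity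
  · rw [← Finset.mul_sum, one_div, inv_mul_eq_one₀ hDne, hD]
    simp [Fin.sum_univ_four]
    ring
  -- Stationarity is homogeneous in `v`: each column is a polynomial identity in `α`, `p`, `D⁻¹`.
  · ext j
    fin_cases j <;> simp [Matrix.vecMul, dotProduct, Fin.sum_univ_four] <;> ring
end

section
/- Let 0 < α < 1 and 0 ≤ p ≤ 1. Consider the Markov kernel K on the countable state space S = {A, B} ∪ {C_i : i ≥ 1} ∪ {D_i : i ≥ 1} given by: K(A,A) = 1 − (1−α)p, K(A,B) = (1−α)p; K(B,C₁) = α, K(B,B) = (1−α)p, K(B,A) = (1−α)(1−p); K(C_i,A) = α, K(C_i,D_i) = 1 − α for every i ≥ 1; K(D_i,C_{i+1}) = α, K(D_i,B) = (1−α)p, K(D_i,A) = (1−α)(1−p) for every i ≥ 1; all other entries are 0. Set Δ = 1 − (1−p)α(1−α) and define π(A) = (1 − (1−α)(α+p))/Δ, π(B) = (1−α)p(1 − α(1−α))/Δ, π(C_i) = α·π(B)·(α(1−α))^{i−1}, and π(D_i) = (1−α)·π(C_i). Then: (i) every row of K sums to 1 and all entries are nonnegative; (ii) π(s) ≥ 0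 for all s ∈ S and ∑_{s∈S} π(s) = 1; (iii) π is stationary, i.e., π(s) = ∑_{s'∈S} π(s')·K(s',s) for every s ∈ S; and (iv) ∑_{i≥1} π(C_i) = π(B)·α/(1 − α(1−α)) and ∑_{i≥1} π(D_i) = π(B)·α(1−α)/(1 − α(1−α)). -/
/-!
Write `q = 1 - α`, `r = α q` and `Δ = 1 - (1 - p) r`; then `0 ≤ r < 1` and `0 < Δ`. The state space
is the disjoint union of two points and two copies of `ℕ`, so a function on it is summed by adding
its two point values to its sums along the `C`- and `D`-states (`WState.hasSum_of_hasSum`).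
Along these states `π` is geometric with ratio `r`, and each row or column of the kernel is, on each
copy of `ℕ`, either constant or supported at a single index. Every infinite sum in the theorem
therefore reduces to geometric series and single terms, and what is left are identities between rational
functions of `α` and `p` with the nonzero denominators `1 - r` and `Δ`.
-/

/-- State space of the Markov chain induced by the strategy `π₂^{Non-predictable}`
(paper's Table 3): `A = S_{0,0}`, `B = S_{0,1}`, `C n = S_{n+1,n+1}` and
`D n = S_{n+1,n+2}` (so the index `n : ℕ` stands for the paper's index `i = n + 1 ≥ 1`). -/
inductive WState where
  | A : WState
  | B : WState
  | C : ℕ → WState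
  | D : ℕ → WState

/-- Transition kernel of the chain of the strategy `π₂^{Non-predictable}`:
`K(A,A) = 1 − (1−α)p`, `K(A,B) = (1−α)p`; `K(B,C₁) = α`, `K(B,B) = (1−α)p`,
`K(B,A) = (1−α)(1−p)`; `K(C_i,A) = α`, `K(C_i,D_i) = 1 − α`; `K(D_i,C_{i+1}) = α`,
`K(D_i,B) = (1−α)p`, `K(D_i,A) = (1−α)(1−p)`; all other entries `0`. -/
def Wkernel (α p : ℝ) : WState → WState → ℝ
  | .A, .A => 1 - (1 - α) * p
  | .A, .B => (1 - α) * p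
  | .A, _ => 0
  | .B, .A => (1 - α) * (1 - p)
  | .B, .B => (1 - α) * p
  | .B, .C n => if n = 0 then α else 0
  | .B, _ => 0
  | .C _, .A => α
  | .C m, .D n => if n = m then 1 - α else 0
  | .C _, _ => 0
  | .D _, .A => (1 - α) * (1 - p)
  | .D _, .B => (1 - α) * p
  | .D m, .C n => if n = m + 1 then α else 0
  | .D _, _ => 0

/-- Claimed stationary distribution: `π(A) = (1 − (1−α)(α+p))/Δ`,
`π(B) = (1−α)p(1 − α(1−α))/Δ` with `Δ = 1 − (1−p)α(1−α)`,
`π(C_i) = α·π(B)·(α(1−α))^{i−1}` and `π(D_i) = (1−α)·π(C_i)`. -/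
noncomputable def Wpi (α p : ℝ) : WState → ℝ
  | .A => (1 - (1 - α) * (α + p)) / (1 - (1 - p) * α * (1 - α))
  | .B => (1 - α) * p * (1 - α * (1 - α)) / (1 - (1 - p) * α * (1 - α))
  | .C n => α * ((1 - α) * p * (1 - α * (1 - α)) / (1 - (1 - p) * α * (1 - α)))
      * (α * (1 - α)) ^ n
  | .D n => (1 - α) * (α * ((1 - α) * p * (1 - α * (1 - α)) / (1 - (1 - p) * α * (1 - α)))
      * (α * (1 - α)) ^ n)

/-- The state space as a disjoint union of two points and two copies of `ℕ`. -/
def WState.equivSum : Bool ⊕ (ℕ ⊕ ℕ) ≃ WState where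
  toFun
    | .inl true => .A
    | .inl false => .B
    | .inr (.inl n) => .C n
    | .inr (.inr n) => .D n
  invFun
    | .A => .inl true
    | .B => .inl false
    | .C n => .inr (.inl n)
    | .D n => .inr (.inr n)
  left_inv := by rintro ((_ | _) | (_ | _)) <;> rfl
  right_inv := by rintro (_ | _ | _ | _) <;> rfl

theorem WState.hasSum_of_hasSum {f : WState → ℝ} {c d : ℝ}
    (hC : HasSum (fun n => f (.C n)) c) (hD : HasSum (fun n => f (.D n)) d) :
    HasSum f (f .A + f .B + (c + d)) := by
  rw [← WState.equivSum.hasSum_iff]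
  refine HasSum.sum ?_ (HasSum.sum hC hD)
  have h := hasSum_fintype (fun b : Bool => f (WState.equivSum (.inl b)))
  rw [Fintype.sum_bool] at h
  exact h

/-- The countable-state chain of the strategy `π₂^{Non-predictable}` (paper's Table 3):
the kernel is row-stochastic, `Wpi` is a probability distribution, it is stationary for the
kernel, and the masses of the `C`- and `D`-states sum to `π(B)·α/(1 − α(1−α))` and
`π(B)·α(1−α)/(1 − α(1−α))` respectively. -/
theorem nonpredictable_strategy_two_stationary_distribution
    (α p : ℝ) (hα0 : 0 < α) (hα1 : α < 1) (hp0 : 0 ≤ p) (hp1 : p ≤ 1) :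
    (∀ s s', 0 ≤ Wkernel α p s s') ∧
    (∀ s, ∑' s', Wkernel α p s s' = 1) ∧
    (∀ s, 0 ≤ Wpi α p s) ∧
    (∑' s, Wpi α p s = 1) ∧
    (∀ s, Wpi α p s = ∑' s', Wpi α p s' * Wkernel α p s' s) ∧
    (∑' n : ℕ, Wpi α p (.C n) = Wpi α p .B * α / (1 - α * (1 - α))) ∧
    (∑' n : ℕ, Wpi α p (.D n) = Wpi α p .B * (α * (1 - α)) / (1 - α * (1 - α))) := by
  have hq : 0 < 1 - α := by linarith
  have hr0 : 0 < α * (1 - α) := mul_pos hα0 hq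
  have hr1 : α * (1 - α) < 1 := by nlinarith
  have hr : 0 < 1 - α * (1 - α) := by linarith
  have hΔ : 0 < 1 - (1 - p) * α * (1 - α) := by nlinarith [mul_nonneg hp0 hr0.le]
  have hr' := hr.ne'
  have hΔ' := hΔ.ne'
  have hB : 0 ≤ Wpi α p .B := by
    simp only [Wpi]
    positivity
  have hCeq : ∀ n, Wpi α p (.C n) = α * Wpi α p .B * (α * (1 - α)) ^ n := fun n => rfl
  have hDeq : ∀ n, Wpi α p (.D n) = (1 - α) * Wpi α p (.C n) := fun n => rfl
  have hC : HasSum (fun n => Wpi α p (.C n)) (Wpi α p .B * α / (1 - α * (1 - α))) := by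
    have h : HasSum (fun n => Wpi α p (.C n)) _ :=
      (hasSum_geometric_of_lt_one hr0.le hr1).mul_left (α * Wpi α p .B)
    rwa [← div_eq_mul_inv, mul_comm α (Wpi α p .B)] at h
  have hD : HasSum (fun n => Wpi α p (.D n))
      (Wpi α p .B * (α * (1 - α)) / (1 - α * (1 - α))) := by
    have h := hC.mul_left (1 - α)
    rwa [show (1 - α) * (Wpi α p .B * α / (1 - α * (1 - α))) =
      Wpi α p .B * (α * (1 - α)) / (1 - α * (1 - α)) by ring] at h
  have hCnn : ∀ n, 0 ≤ Wpi α p (.C n) := fun n => by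
    rw [hCeq]
    positivity
  refine ⟨?_, ?_, ?_, ?_, ?_, hC.tsum_eq, hD.tsum_eq⟩
  · have h1 : 0 ≤ (1 - α) * p := by positivity
    have h2 : 0 ≤ (1 - α) * (1 - p) := mul_nonneg hq.le (by linarith)
    have h3 : 0 ≤ 1 - (1 - α) * p := by nlinarith
    rintro (_ | _ | m | m) (_ | _ | n | n) <;> simp only [Wkernel] <;> (try split_ifs) <;> linarith
  · rintro (_ | _ | m | m)
    · rw [(WState.hasSum_of_hasSum (f := Wkernel α p .A) hasSum_zero hasSum_zero).tsum_eq]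
      simp only [Wkernel]
      ring
    · rw [(WState.hasSum_of_hasSum (f := Wkernel α p .B)
        (hasSum_ite_eq 0 α) hasSum_zero).tsum_eq]
      simp only [Wkernel]
      ring
    · rw [(WState.hasSum_of_hasSum (f := Wkernel α p (.C m))
        hasSum_zero (hasSum_ite_eq m (1 - α))).tsum_eq]
      simp only [Wkernel]
      ring
    · rw [(WState.hasSum_of_hasSum (f := Wkernel α p (.D m))
        (hasSum_ite_eq (m + 1) α) hasSum_zero).tsum_eq]
      simp only [Wkernel]
      ring
  · rintro (_ | _ | n | n)
    · -- The numerator is at least its value `α ^ 2` at `p = 1`.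
      have : 0 ≤ 1 - (1 - α) * (α + p) := by nlinarith
      simp only [Wpi]
      positivity
    · exact hB
    · exact hCnn n
    · exact mul_nonneg hq.le (hCnn n)
  · rw [(WState.hasSum_of_hasSum hC hD).tsum_eq]
    simp only [Wpi]
    -- `Δ` is kept atomic so that its nonvanishing is recognised when denominators are cleared.
    generalize hE : 1 - (1 - p) * α * (1 - α) = E at hΔ' ⊢
    field_simp
    rw [← hE]
    ring
  · rintro (_ | _ | n | n)
    · rw [(WState.hasSum_of_hasSum (f := fun s' => Wpi α p s' * Wkernel α p s' .A)
        (hC.mul_right α) (hD.mul_right ((1 - α) * (1 - p)))).tsum_eq]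
      simp only [Wpi, Wkernel]
      generalize 1 - (1 - p) * α * (1 - α) = E at hΔ' ⊢
      field_simp
      ring
    · rw [(WState.hasSum_of_hasSum (f := fun s' => Wpi α p s' * Wkernel α p s' .B)
        (c := 0) (by simp [Wkernel, hasSum_zero]) (hD.mul_right ((1 - α) * p))).tsum_eq]
      simp only [Wpi, Wkernel]
      generalize hE : 1 - (1 - p) * α * (1 - α) = E at hΔ' ⊢
      field_simp
      rw [← hE]
      ring
    · -- `C 0` is entered only from `B`, and `C (n + 1)` only from `D n`.
      cases n with
      | zero =>
        rw [tsum_eq_single .B (by rintro (_ | _ | m | m) h <;> simp_all [Wkernel])]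
        simp only [Wkernel, hCeq]
        simp [mul_comm]
      | succ n =>
        rw [tsum_eq_single (.D n) (by
          rintro (_ | _ | m | m) h <;> simp_all [Wkernel]
          exact fun h' => absurd h'.symm h)]
        simp only [Wkernel, hDeq, hCeq, if_true]
        ring
    · rw [tsum_eq_single (.C n) (by
        rintro (_ | _ | m | m) h <;> simp_all [Wkernel]
        exact fun h' => absurd h'.symm h)]
      simp only [Wkernel, hDeq, if_true]
      ring
end
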